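/- (Companion version of the RBBG identity.) For every real p with 0 ≤ p < 1, one has ₂F₁(1/3, 2/3; 1; β̃(p)) = γ̃(p) · ₂F₁(1/2, 1/2; 1; α(p)), where β̃(p) := 27p(1+p)⁴/(2(1+4p+p²)³) and γ̃(p) := (1+4p+p²)/√(1+2p). (For such p both α(p) and β̃(p) lie in [0,1), so both hypergeometric series converge absolutely.) -/

import Mathlib

open Real

/-- Gauss hypergeometric function ₂F₁ defined via its power series
    (the tsum; converges absolutely for |z| < 1). -/
noncomputable def hyp2F1 (a b c z : ℝ) : ℝ :=
  ∑' n : ℕ, ((ascPochhammer ℝ n).eval a * (ascPochhammer ℝ n).eval b /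
      (ascPochhammer ℝ n).eval c) * z ^ n / (Nat.factorial n)

noncomputable def α (p : ℝ) : ℝ := p ^ 3 * (2 + p) / (1 + 2 * p)

noncomputable def βt (p : ℝ) : ℝ := 27 * p * (1 + p) ^ 4 / (2 * (1 + 4 * p + p ^ 2) ^ 3)

noncomputable def γt (p : ℝ) : ℝ := (1 + 4 * p + p ^ 2) / Real.sqrt (1 + 2 * p)

/-!
For `a + b = 1` the hypergeometric equation of `F = ₂F₁(a, b; 1; ·)` is self-adjoint:
`(x (1 - x) F')' = a b F`. A change of variable, or multiplication by a function, turns a solution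
of a Sturm–Liouville equation `(P u')' = Q u` into a solution of another one. It turns out that
`t ↦ ₂F₁(1/3, 2/3; 1; β̃(t))` and `t ↦ γ̃(t) ₂F₁(1/2, 1/2; 1; α(t))` solve the same equation on
`[0, 1)`. Its leading coefficient `P` vanishes at `0`, so the Wronskian `P (u' v - u v')` of these
two solutions, being constant, is zero; they are hence proportional, and both equal `1` at `0`.
-/

open Set

section PowerSeries

variable {𝕜 : Type*} [NontriviallyNormedField 𝕜] {f : 𝕜 → 𝕜} {c : ℕ → 𝕜}

theorem hasFPowerSeriesOnBall_deriv_ofScalars [CompleteSpace 𝕜] {x : 𝕜} {r : ENNReal}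
    (hf : HasFPowerSeriesOnBall f (FormalMultilinearSeries.ofScalars 𝕜 c) x r) :
    HasFPowerSeriesOnBall (deriv f)
      (FormalMultilinearSeries.ofScalars 𝕜 fun n ↦ (n + 1) * c (n + 1)) x r := by
  have h := (ContinuousLinearMap.apply 𝕜 𝕜 (1 : 𝕜)).comp_hasFPowerSeriesOnBall hf.fderiv
  convert! h using 1
  ext n
  simp [FormalMultilinearSeries.coeff_ofScalars, FormalMultilinearSeries.derivSeries_coeff_one]

theorem hasSum_of_hasFPowerSeriesOnBall_ofScalars {r : ENNReal} {x : 𝕜}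
    (hf : HasFPowerSeriesOnBall f (FormalMultilinearSeries.ofScalars 𝕜 c) 0 r)
    (hx : x ∈ Metric.eball 0 r) : HasSum (fun n ↦ c n * x ^ n) (f x) := by
  simpa [FormalMultilinearSeries.ofScalars_apply_eq, mul_comm] using hf.hasSum hx

end PowerSeries

theorem mem_eball_zero_one {E : Type*} [SeminormedAddCommGroup E] {x : E} :
    x ∈ Metric.eball 0 1 ↔ ‖x‖ < 1 := by
  rw [← ENNReal.ofReal_one, Metric.eball_ofReal, mem_ball_zero_iff]

theorem hasSum_mul_of_hasSum_succ {R : Type*} [Ring R] [TopologicalSpace R]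
    [IsTopologicalRing R] {f g : ℕ → R} {x s : R} (hg : HasSum g s) (h0 : f 0 = 0)
    (hf : ∀ n, f (n + 1) = x * g n) : HasSum f (x * s) := by
  rw [← hasSum_nat_add_iff' 1]
  simpa [h0, hf] using hg.mul_left x

section Hypergeometric

variable {𝕂 : Type*} [RCLike 𝕂] (a b c : 𝕂)

theorem one_le_radius_ordinaryHypergeometricSeries :
    1 ≤ (ordinaryHypergeometricSeries 𝕂 a b c).radius := by
  by_cases habc : ∀ k : ℕ, ↑k ≠ -a ∧ ↑k ≠ -b ∧ ↑k ≠ -c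
  · exact (ordinaryHypergeometricSeries_radius_eq_one 𝕂 a b c habc).ge
  · simp only [not_forall, ne_eq, not_and_or, not_not] at habc
    obtain ⟨k, hk | hk | hk⟩ := habc <;> obtain rfl := neg_eq_iff_eq_neg.mp hk.symm
    · simp [ordinaryHypergeometric_radius_top_of_neg_nat₁]
    · simp [ordinaryHypergeometric_radius_top_of_neg_nat₂]
    · simp [ordinaryHypergeometric_radius_top_of_neg_nat₃]

theorem hasFPowerSeriesOnBall_ordinaryHypergeometric :
    HasFPowerSeriesOnBall (₂F₁ a b c) (ordinaryHypergeometricSeries 𝕂 a b c) 0 1 :=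
  have h := one_le_radius_ordinaryHypergeometricSeries a b c
  ((ordinaryHypergeometricSeries 𝕂 a b c).hasFPowerSeriesOnBall
    (one_pos.trans_le h)).mono one_pos h

variable {c} in
theorem ordinaryHypergeometricCoefficient_succ {n : ℕ} (hc : c + n ≠ 0) :
    (n + 1) * (c + n) * ordinaryHypergeometricCoefficient a b c (n + 1) =
      (a + n) * (b + n) * ordinaryHypergeometricCoefficient a b c n := by
  have hn : (n : 𝕂) + 1 ≠ 0 := n.cast_add_one_ne_zero
  simp only [ordinaryHypergeometricCoefficient, ascPochhammer_succ_eval, Nat.factorial_succ,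
    Nat.cast_mul, Nat.cast_succ, mul_inv]
  field_simp

variable {c} in
theorem ordinaryHypergeometric_ode (hc : ∀ n : ℕ, c + n ≠ 0) {x : 𝕂} (hx : ‖x‖ < 1) :
    x * (1 - x) * deriv (deriv (₂F₁ a b c)) x + (c - (a + b + 1) * x) * deriv (₂F₁ a b c) x =
      a * b * ₂F₁ a b c x := by
  set F : 𝕂 → 𝕂 := ₂F₁ a b c
  set h := ordinaryHypergeometricCoefficient a b c
  have hx' : x ∈ Metric.eball 0 1 := mem_eball_zero_one.2 hx
  have hF := hasFPowerSeriesOnBall_ordinaryHypergeometric a b c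
  have hF' := hasFPowerSeriesOnBall_deriv_ofScalars hF
  have hF'' := hasFPowerSeriesOnBall_deriv_ofScalars hF'
  have sF : HasSum (fun n ↦ h n * x ^ n) (F x) :=
    hasSum_of_hasFPowerSeriesOnBall_ofScalars hF hx'
  have sF' : HasSum (fun n : ℕ ↦ (n + 1) * h (n + 1) * x ^ n) (deriv F x) :=
    hasSum_of_hasFPowerSeriesOnBall_ofScalars hF' hx'
  have sF'' := hasSum_of_hasFPowerSeriesOnBall_ofScalars hF'' hx'
  have sxF' : HasSum (fun n : ℕ ↦ n * h n * x ^ n) (x * deriv F x) :=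
    hasSum_mul_of_hasSum_succ sF' (by simp) fun n ↦ by push_cast; ring
  have sxF'' : HasSum (fun n : ℕ ↦ n * (n + 1) * h (n + 1) * x ^ n) (x * deriv (deriv F) x) :=
    hasSum_mul_of_hasSum_succ sF'' (by simp) fun n ↦ by push_cast; ring
  have sxxF'' : HasSum (fun n : ℕ ↦ n * (n - 1) * h n * x ^ n) (x * (x * deriv (deriv F) x)) :=
    hasSum_mul_of_hasSum_succ sxF'' (by simp) fun n ↦ by push_cast; ring
  have sODE := (sxF''.sub sxxF'').add ((sF'.mul_left c).sub (sxF'.mul_left (a + b + 1)))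
  have hterm (n : ℕ) : n * (n + 1) * h (n + 1) * x ^ n - n * (n - 1) * h n * x ^ n +
      (c * ((n + 1) * h (n + 1) * x ^ n) - (a + b + 1) * (n * h n * x ^ n)) =
      a * b * (h n * x ^ n) := by
    linear_combination x ^ n * ordinaryHypergeometricCoefficient_succ a b (hc n)
  simp only [hterm] at sODE
  linear_combination sODE.unique (sF.mul_left (a * b))

end Hypergeometric

/-- `u` solves `(P u')' = Q u` on `s`. The flux `P u'` is represented by a function `w` that has to
agree with it on `s` only, so that `s` need not be open, and zeros of `P` are allowed. -/
def IsSturmLiouvilleSolution {𝕜 : Type*} [NontriviallyNormedField 𝕜] (P Q u : 𝕜 → 𝕜)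
    (s : Set 𝕜) : Prop :=
  ∃ w : 𝕜 → 𝕜, ∀ x ∈ s,
    DifferentiableAt 𝕜 u x ∧ w x = P x * deriv u x ∧ HasDerivAt w (Q x * u x) x

namespace IsSturmLiouvilleSolution

section Field

variable {𝕜 : Type*} [NontriviallyNormedField 𝕜] {P Q u : 𝕜 → 𝕜} {s : Set 𝕜}

theorem differentiableAt (hu : IsSturmLiouvilleSolution P Q u s) {x : 𝕜} (hx : x ∈ s) :
    DifferentiableAt 𝕜 u x :=
  let ⟨_, hw⟩ := hu
  (hw x hx).1

theorem congr {P' Q' : 𝕜 → 𝕜} (hu : IsSturmLiouvilleSolution P Q u s) (hP : EqOn P P' s)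
    (hQ : EqOn Q Q' s) : IsSturmLiouvilleSolution P' Q' u s := by
  obtain ⟨w, hw⟩ := hu
  refine ⟨w, fun x hx ↦ ?_⟩
  rw [← hP hx, ← hQ hx]
  exact hw x hx

theorem const_mul (hu : IsSturmLiouvilleSolution P Q u s) (k : 𝕜) :
    IsSturmLiouvilleSolution (fun x ↦ k * P x) (fun x ↦ k * Q x) u s := by
  obtain ⟨w, hw⟩ := hu
  refine ⟨fun x ↦ k * w x, fun x hx ↦ ?_⟩
  obtain ⟨hu', hflux, hw'⟩ := hw x hx
  exact ⟨hu', by simp only [hflux, mul_assoc], by simpa only [mul_assoc] using hw'.const_mul k⟩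

/-- The new coefficient `R = (P ∘ φ) / φ'` is given without division since `φ'` may vanish, as `α'`
does at `0`. -/
theorem comp {φ φ' R : 𝕜 → 𝕜} {t : Set 𝕜} (hu : IsSturmLiouvilleSolution P Q u s)
    (hφ : MapsTo φ t s) (hφ' : ∀ x ∈ t, HasDerivAt φ (φ' x) x)
    (hR : ∀ x ∈ t, P (φ x) = R x * φ' x) :
    IsSturmLiouvilleSolution R (fun x ↦ Q (φ x) * φ' x) (u ∘ φ) t := by
  obtain ⟨w, hw⟩ := hu
  refine ⟨w ∘ φ, fun x hx ↦ ?_⟩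
  obtain ⟨hu', hflux, hw'⟩ := hw (φ x) (hφ hx)
  have hcomp : HasDerivAt (u ∘ φ) (deriv u (φ x) * φ' x) x := hu'.hasDerivAt.comp x (hφ' x hx)
  refine ⟨hcomp.differentiableAt, ?_, ?_⟩
  · rw [hcomp.deriv, Function.comp_apply, hflux, hR x hx]
    ring
  · exact (hw'.comp x (hφ' x hx)).congr_deriv (by simp only [Function.comp_apply]; ring)

theorem mul {g ℓ m' : 𝕜 → 𝕜} (hu : IsSturmLiouvilleSolution P Q u s)
    (hg : ∀ x ∈ s, HasDerivAt g (ℓ x * g x) x) (hg0 : ∀ x ∈ s, g x ≠ 0)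
    (hPℓ : ∀ x ∈ s, HasDerivAt (fun x ↦ P x * ℓ x) (m' x) x) :
    IsSturmLiouvilleSolution (fun x ↦ P x / g x ^ 2)
      (fun x ↦ (m' x - P x * ℓ x ^ 2 + Q x) / g x ^ 2) (fun x ↦ g x * u x) s := by
  obtain ⟨w, hw⟩ := hu
  refine ⟨fun x ↦ (P x * ℓ x * u x + w x) / g x, fun x hx ↦ ?_⟩
  obtain ⟨hu', hflux, hw'⟩ := hw x hx
  have hgx := hg0 x hx
  have hgu := (hg x hx).fun_mul hu'.hasDerivAt
  refine ⟨hgu.differentiableAt, ?_, ?_⟩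
  · simp only [hgu.deriv, hflux]
    field
  · refine ((((hPℓ x hx).fun_mul hu'.hasDerivAt).fun_add hw').fun_div (hg x hx) hgx).congr_deriv ?_
    rw [hflux]
    field

end Field

variable {P Q u v : ℝ → ℝ} {a b : ℝ}

theorem deriv_mul_eq_mul_deriv (hu : IsSturmLiouvilleSolution P Q u (Ico a b))
    (hv : IsSturmLiouvilleSolution P Q v (Ico a b)) (hPa : P a = 0)
    (hP : ∀ x ∈ Ioo a b, P x ≠ 0) {x : ℝ} (hx : x ∈ Ioo a b) :
    deriv u x * v x = u x * deriv v x := by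
  obtain ⟨w, hw⟩ := hu
  obtain ⟨z, hz⟩ := hv
  have hsub : Icc a x ⊆ Ico a b := Icc_subset_Ico_right hx.2
  have hW : ∀ y ∈ Ico a b, HasDerivAt (fun y ↦ w y * v y - u y * z y) 0 y := by
    intro y hy
    obtain ⟨hu', hwy, hw'⟩ := hw y hy
    obtain ⟨hv', hzy, hz'⟩ := hz y hy
    refine ((hw'.fun_mul hv'.hasDerivAt).fun_sub (hu'.hasDerivAt.fun_mul hz')).congr_deriv ?_
    rw [hwy, hzy]
    ring
  have hconst := constant_of_has_deriv_right_zero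
    (fun y hy ↦ (hW y (hsub hy)).continuousAt.continuousWithinAt)
    (fun y hy ↦ (hW y (hsub (Ico_subset_Icc_self hy))).hasDerivWithinAt) x
    (right_mem_Icc.2 hx.1.le)
  have ha : a ∈ Ico a b := left_mem_Ico.2 (hx.1.trans hx.2)
  have hx' : x ∈ Ico a b := Ioo_subset_Ico_self hx
  simp only [(hw _ ha).2.1, (hz _ ha).2.1, (hw _ hx').2.1, (hz _ hx').2.1, hPa] at hconst
  refine mul_left_cancel₀ (hP x hx) ?_
  linear_combination hconst

theorem div_eq_div_left (hu : IsSturmLiouvilleSolution P Q u (Ico a b))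
    (hv : IsSturmLiouvilleSolution P Q v (Ico a b)) (hPa : P a = 0)
    (hP : ∀ x ∈ Ioo a b, P x ≠ 0) (hv0 : ∀ x ∈ Ico a b, v x ≠ 0) {x : ℝ} (hx : x ∈ Ico a b) :
    u x / v x = u a / v a := by
  have hdiff {y : ℝ} (hy : y ∈ Ico a b) : DifferentiableAt ℝ (fun y ↦ u y / v y) y :=
    (hu.differentiableAt hy).fun_div (hv.differentiableAt hy) (hv0 y hy)
  have hderiv : ∀ y ∈ Ioo a x, deriv (fun y ↦ u y / v y) y = 0 := by
    intro y hy
    have hyb : y ∈ Ioo a b := Ioo_subset_Ioo_right hx.2.le hy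
    have hy' : y ∈ Ico a b := Ioo_subset_Ico_self hyb
    rw [deriv_fun_div (hu.differentiableAt hy') (hv.differentiableAt hy') (hv0 y hy'),
      hu.deriv_mul_eq_mul_deriv hv hPa hP hyb, sub_self, zero_div]
  rcases hx.1.eq_or_lt with rfl | hax
  · rfl
  have hsub : Icc a x ⊆ Ico a b := Icc_subset_Ico_right hx.2
  obtain ⟨y, hy, hslope⟩ := exists_deriv_eq_slope (fun y ↦ u y / v y) hax
    (fun y hy ↦ (hdiff (hsub hy)).continuousAt.continuousWithinAt)
    (fun y hy ↦ (hdiff (hsub (Ioo_subset_Icc_self hy))).differentiableWithinAt)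
  rw [hderiv y hy, eq_comm, div_eq_zero_iff] at hslope
  exact sub_eq_zero.1 (hslope.resolve_right (sub_pos.2 hax).ne')

end IsSturmLiouvilleSolution

theorem hyp2F1_eq_ordinaryHypergeometric (a b c : ℝ) : hyp2F1 a b c = ₂F₁ a b c := by
  funext x
  rw [ordinaryHypergeometric_eq_tsum]
  refine tsum_congr fun n ↦ ?_
  rw [smul_eq_mul]
  field

theorem hyp2F1_zero (a b c : ℝ) : hyp2F1 a b c 0 = 1 := by
  rw [hyp2F1_eq_ordinaryHypergeometric, ordinaryHypergeometric_zero]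

theorem hyp2F1_pos {a b c x : ℝ} (ha : 0 < a) (hb : 0 < b) (hc : 0 < c) (hx : x ∈ Ico 0 1) :
    0 < hyp2F1 a b c x := by
  have hsum : HasSum (fun n ↦ ordinaryHypergeometricCoefficient a b c n * x ^ n)
      (hyp2F1 a b c x) := by
    rw [hyp2F1_eq_ordinaryHypergeometric]
    exact hasSum_of_hasFPowerSeriesOnBall_ofScalars
      (hasFPowerSeriesOnBall_ordinaryHypergeometric a b c)
      (mem_eball_zero_one.2 ((norm_of_nonneg hx.1).trans_lt hx.2))
  have hcoeff (n : ℕ) : 0 < ordinaryHypergeometricCoefficient a b c n := by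
    have := ascPochhammer_pos n a ha
    have := ascPochhammer_pos n b hb
    have := ascPochhammer_pos n c hc
    positivity
  calc 0 < ordinaryHypergeometricCoefficient a b c 0 * x ^ 0 := by simp
    _ ≤ hyp2F1 a b c x :=
      le_hasSum hsum 0 fun n _ ↦ mul_nonneg (hcoeff n).le (pow_nonneg hx.1 n)

theorem isSturmLiouvilleSolution_hyp2F1 {a b : ℝ} (hab : a + b = 1) :
    IsSturmLiouvilleSolution (fun x ↦ x * (1 - x)) (fun _ ↦ a * b) (hyp2F1 a b 1)
      (Ioo (-1) 1) := by
  rw [hyp2F1_eq_ordinaryHypergeometric]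
  have hF := hasFPowerSeriesOnBall_ordinaryHypergeometric a b 1
  refine ⟨fun x ↦ x * (1 - x) * deriv (₂F₁ a b 1) x, fun x hx ↦ ?_⟩
  have hx1 : ‖x‖ < 1 := abs_lt.2 hx
  have hF' := hF.analyticAt_of_mem (mem_eball_zero_one.2 hx1)
  refine ⟨hF'.differentiableAt, rfl, ?_⟩
  refine (((hasDerivAt_id' x).fun_mul ((hasDerivAt_id' x).const_sub 1)).fun_mul
    hF'.deriv.differentiableAt.hasDerivAt).congr_deriv ?_
  have hode := ordinaryHypergeometric_ode a b (c := 1) (x := x) (fun n ↦ by positivity) hx1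
  rw [hab] at hode
  linear_combination hode

section Parametrization

variable {t : ℝ}

theorem one_sub_α (ht : 0 ≤ t) : 1 - α t = (1 - t) * (1 + t) ^ 3 / (1 + 2 * t) := by
  unfold α
  field

theorem one_sub_βt (ht : 0 ≤ t) :
    1 - βt t = (1 - t) ^ 4 * (1 + 2 * t) * (2 + t) / (2 * (1 + 4 * t + t ^ 2) ^ 3) := by
  unfold βt
  field

theorem mapsTo_α : MapsTo α (Ico 0 1) (Ico 0 1) := by
  rintro t ⟨ht0, ht1⟩
  have : 0 < 1 - t := sub_pos.2 ht1
  refine ⟨by unfold α; positivity, sub_pos.1 ?_⟩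
  rw [one_sub_α ht0]
  positivity

theorem mapsTo_βt : MapsTo βt (Ico 0 1) (Ico 0 1) := by
  rintro t ⟨ht0, ht1⟩
  have : 0 < 1 - t := sub_pos.2 ht1
  refine ⟨by unfold βt; positivity, sub_pos.1 ?_⟩
  rw [one_sub_βt ht0]
  positivity

theorem hasDerivAt_α (ht : 0 ≤ t) :
    HasDerivAt α (6 * t ^ 2 * (1 + t) ^ 2 / (1 + 2 * t) ^ 2) t := by
  have h := ((hasDerivAt_pow 3 t).fun_mul ((hasDerivAt_id' t).const_add 2)).fun_div
    (((hasDerivAt_id' t).const_mul 2).const_add 1) (by positivity)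
  refine h.congr_deriv ?_
  simp only [Nat.cast_ofNat, Nat.add_one_sub_one, mul_one]
  field

theorem hasDerivAt_one_add_four_mul_add_sq (t : ℝ) :
    HasDerivAt (fun t ↦ 1 + 4 * t + t ^ 2) (4 + 2 * t) t := by
  simpa using (((hasDerivAt_id' t).const_mul 4).const_add 1).fun_add (hasDerivAt_pow 2 t)

theorem hasDerivAt_βt (ht : 0 ≤ t) :
    HasDerivAt βt (27 * (1 + t) ^ 3 * (1 - t) ^ 3 / (2 * (1 + 4 * t + t ^ 2) ^ 4)) t := by
  have hD := hasDerivAt_one_add_four_mul_add_sq t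
  have h := (((hasDerivAt_id' t).const_mul 27).fun_mul
    (((hasDerivAt_id' t).const_add 1).fun_pow 4)).fun_div ((hD.fun_pow 3).const_mul 2)
    (by positivity)
  refine h.congr_deriv ?_
  simp only [Nat.cast_ofNat, Nat.add_one_sub_one, mul_one]
  field

/-- The logarithmic derivative of `γt` is rational, which keeps square roots out of the differential
equation for `γt · (u ∘ α)`. -/
theorem hasDerivAt_γt (ht : 0 ≤ t) :
    HasDerivAt γt (3 * (1 + t) ^ 2 / ((1 + 4 * t + t ^ 2) * (1 + 2 * t)) * γt t) t := by
  have hD := hasDerivAt_one_add_four_mul_add_sq t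
  have h := hD.fun_div ((((hasDerivAt_id' t).const_mul 2).const_add 1).sqrt (by positivity))
    (by positivity)
  refine h.congr_deriv ?_
  have hs : √(1 + 2 * t) ^ 2 = 1 + 2 * t := sq_sqrt (by positivity)
  unfold γt
  field_simp
  simp only [hs]
  ring

theorem γt_pos (ht : 0 ≤ t) : 0 < γt t := by
  unfold γt
  positivity

theorem γt_sq (ht : 0 ≤ t) : γt t ^ 2 = (1 + 4 * t + t ^ 2) ^ 2 / (1 + 2 * t) := by
  rw [γt, div_pow, sq_sqrt (by positivity)]

end Parametrization

theorem isSturmLiouvilleSolution_comp_βt :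
    IsSturmLiouvilleSolution
      (fun t ↦ t * (1 + t) * (1 - t) * (1 + 2 * t) * (2 + t) / (2 * (1 + 4 * t + t ^ 2) ^ 2))
      (fun t ↦ 3 * (1 + t) ^ 3 * (1 - t) ^ 3 / (1 + 4 * t + t ^ 2) ^ 4)
      (hyp2F1 (1 / 3) (2 / 3) 1 ∘ βt) (Ico 0 1) := by
  have h := isSturmLiouvilleSolution_hyp2F1 (a := 1 / 3) (b := 2 / 3) (by norm_num)
  refine (h.comp (mapsTo_βt.mono_right (Ico_subset_Ioo_left neg_one_lt_zero))
    (fun t ht ↦ hasDerivAt_βt ht.1) fun t ht ↦ ?_).congr (fun t _ ↦ rfl) fun t ht ↦ ?_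
  · have ht0 := ht.1
    rw [one_sub_βt ht0, βt]
    field
  · have ht0 := ht.1
    field

theorem isSturmLiouvilleSolution_comp_α :
    IsSturmLiouvilleSolution (fun t ↦ t * (1 + t) * (1 - t) * (2 + t) / 6)
      (fun t ↦ 3 * t ^ 2 * (1 + t) ^ 2 / (2 * (1 + 2 * t) ^ 2))
      (hyp2F1 (1 / 2) (1 / 2) 1 ∘ α) (Ico 0 1) := by
  have h := isSturmLiouvilleSolution_hyp2F1 (a := 1 / 2) (b := 1 / 2) (by norm_num)
  refine (h.comp (mapsTo_α.mono_right (Ico_subset_Ioo_left neg_one_lt_zero))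
    (fun t ht ↦ hasDerivAt_α ht.1) fun t ht ↦ ?_).congr (fun t _ ↦ rfl) fun t ht ↦ ?_
  · have ht0 := ht.1
    rw [one_sub_α ht0, α]
    field
  · have ht0 := ht.1
    field

theorem isSturmLiouvilleSolution_γt_mul_comp_α :
    IsSturmLiouvilleSolution
      (fun t ↦ t * (1 + t) * (1 - t) * (1 + 2 * t) * (2 + t) / (2 * (1 + 4 * t + t ^ 2) ^ 2))
      (fun t ↦ 3 * (1 + t) ^ 3 * (1 - t) ^ 3 / (1 + 4 * t + t ^ 2) ^ 4)
      (fun t ↦ γt t * hyp2F1 (1 / 2) (1 / 2) 1 (α t)) (Ico 0 1) := by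
  have hP (t : ℝ) : HasDerivAt (fun t ↦ 3 * (t * (1 + t) * (1 - t) * (2 + t) / 6)) _ t :=
    (((((hasDerivAt_id' t).fun_mul ((hasDerivAt_id' t).const_add 1)).fun_mul
      ((hasDerivAt_id' t).const_sub 1)).fun_mul ((hasDerivAt_id' t).const_add 2)).div_const
      6).const_mul 3
  have hℓ (t : ℝ) (ht : 0 ≤ t) :
      HasDerivAt (fun t ↦ 3 * (1 + t) ^ 2 / ((1 + 4 * t + t ^ 2) * (1 + 2 * t))) _ t :=
    ((((hasDerivAt_id' t).const_add 1).fun_pow 2).const_mul 3).fun_div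
      ((hasDerivAt_one_add_four_mul_add_sq t).fun_mul
        (((hasDerivAt_id' t).const_mul 2).const_add 1)) (by positivity)
  refine ((isSturmLiouvilleSolution_comp_α.const_mul 3).mul
    (fun t ht ↦ hasDerivAt_γt ht.1) (fun t ht ↦ (γt_pos ht.1).ne')
    (fun t ht ↦ (hP t).fun_mul (hℓ t ht.1))).congr (fun t ht ↦ ?_) fun t ht ↦ ?_
  · have ht0 := ht.1
    simp only [γt_sq ht0]
    field
  · have ht0 := ht.1
    simp only [γt_sq ht0]
    field

/-- Companion version of the RBBG identity. -/
theorem RBBG_companion (p : ℝ) (hp0 : 0 ≤ p) (hp1 : p < 1) :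
    hyp2F1 (1/3) (2/3) 1 (βt p) = γt p * hyp2F1 (1/2) (1/2) 1 (α p) := by
  have hβ_pos : ∀ t ∈ Ico 0 1, 0 < (hyp2F1 (1 / 3) (2 / 3) 1 ∘ βt) t := fun t ht ↦
    hyp2F1_pos (by norm_num) (by norm_num) one_pos (mapsTo_βt ht)
  have hp : p ∈ Ico 0 1 := ⟨hp0, hp1⟩
  have hratio := isSturmLiouvilleSolution_γt_mul_comp_α.div_eq_div_left
    isSturmLiouvilleSolution_comp_βt (by simp)
    (fun t ht ↦ by
      have ht0 := ht.1
      have ht1 : 0 < 1 - t := sub_pos.2 ht.2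
      positivity)
    (fun t ht ↦ (hβ_pos t ht).ne') hp
  have h0 : γt 0 * hyp2F1 (1 / 2) (1 / 2) 1 (α 0) / (hyp2F1 (1 / 3) (2 / 3) 1 ∘ βt) 0 = 1 := by
    simp [γt, α, βt, hyp2F1_zero]
  rw [h0, div_eq_one_iff_eq (hβ_pos p hp).ne'] at hratio
  exact hratio.symm
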